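/- Let μ be a regular cardinal and let M, N be transitive models of ZFC⁻ such that o(M) = o(N) = μ⁺ and μ is the largest cardinal of both M and N. Suppose π : M → N is elementary. Then the set of fixed points of π is a member of the μ-club filter C_{μ,μ⁺} on μ⁺. -/

import Mathlib

/- ## A framework for transitive class/set models of fragments of ZFC,
     inside the universe `ZFSet` of ZF sets. -/

open FirstOrder FirstOrder.Language

/-- The language of set theory: a single binary relation symbol `∈`. -/
inductive SetLRel : ℕ → Type
  | mem : SetLRel 2

/-- The first-order language of set theory. -/
def setL : FirstOrder.Language := ⟨fun _ => Empty, SetLRel⟩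

/-- Evaluation of a term of the language of set theory (terms are just variables). -/
def tval {n : ℕ} (v : Fin n → ZFSet) : setL.Term (Empty ⊕ Fin n) → ZFSet
  | .var (Sum.inl e) => e.elim
  | .var (Sum.inr i) => v i
  | .func f _ => f.elim

/-- Tarskian satisfaction of a formula of the language of set theory in a class `S` of
ZF-sets (equipped with true membership), under the assignment `v`. -/
def ZSat (S : Set ZFSet) : ∀ {n : ℕ}, setL.BoundedFormula Empty n → (Fin n → ZFSet) → Prop
  | _, .falsum, _ => False
  | _, .equal t u, v => tval v t = tval v u
  | _, .rel R ts, v =>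
      match R with
      | SetLRel.mem => tval v (ts 0) ∈ tval v (ts 1)
  | _, .imp φ ψ, v => ZSat S φ v → ZSat S ψ v
  | _, .all φ, v => ∀ x ∈ S, ZSat S φ (Fin.snoc v x)

/-- Satisfaction of a sentence in a class of ZF-sets. -/
def SatS (S : Set ZFSet) (σ : setL.Sentence) : Prop := ZSat S σ finZeroElim

/-- A class of ZF-sets is transitive. -/
def IsTransClass (S : Set ZFSet) : Prop := ∀ x ∈ S, ∀ y ∈ x, y ∈ S

/-- `r` is a well-ordering of the set `x`, from the point of view of the class `S`
(Kuratowski pairs code the relation; minimality is required for nonempty subsets of `x`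
lying in `S`). -/
def WellOrders (S : Set ZFSet) (r x : ZFSet) : Prop :=
  (∀ a ∈ x, ZFSet.pair a a ∉ r) ∧
  (∀ a ∈ x, ∀ b ∈ x, ∀ c ∈ x, ZFSet.pair a b ∈ r → ZFSet.pair b c ∈ r → ZFSet.pair a c ∈ r) ∧
  (∀ a ∈ x, ∀ b ∈ x, a ≠ b → (ZFSet.pair a b ∈ r ∨ ZFSet.pair b a ∈ r)) ∧
  (∀ y ∈ S, (∀ z ∈ y, z ∈ x) → y ≠ ∅ → ∃ m ∈ y, ∀ z ∈ y, ZFSet.pair z m ∉ r)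

/-- `S` is a transitive model of ZFC⁻, i.e. of ZFC stated with the Replacement Scheme and
the Well-Ordering Theorem but without the Power Set Axiom.  (Extensionality and Foundation
are automatic for transitive classes of ZF-sets.) -/
def ModelsZFCminus (S : Set ZFSet) : Prop :=
  IsTransClass S ∧
  (∅ : ZFSet) ∈ S ∧
  (∀ x ∈ S, ∀ y ∈ S, ({x, y} : ZFSet) ∈ S) ∧
  (∀ x ∈ S, (ZFSet.sUnion x : ZFSet) ∈ S) ∧
  ZFSet.omega ∈ S ∧
  (∀ (n : ℕ) (φ : setL.BoundedFormula Empty (n + 1)) (p : Fin n → ZFSet),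
    (∀ i, p i ∈ S) → ∀ a ∈ S, ∃ b ∈ S, ∀ y, y ∈ b ↔ (y ∈ a ∧ ZSat S φ (Fin.snoc p y))) ∧
  (∀ (n : ℕ) (φ : setL.BoundedFormula Empty (n + 2)) (p : Fin n → ZFSet),
    (∀ i, p i ∈ S) → ∀ a ∈ S,
      (∀ x ∈ a, ∃! y, y ∈ S ∧ ZSat S φ (Fin.snoc (Fin.snoc p x) y)) →
      ∃ b ∈ S, ∀ y, y ∈ b ↔ ∃ x ∈ a, y ∈ S ∧ ZSat S φ (Fin.snoc (Fin.snoc p x) y)) ∧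
  (∀ x ∈ S, ∃ r ∈ S, WellOrders S r x)

/-- `S` is a transitive model of ZFC. -/
def ModelsZFC (S : Set ZFSet) : Prop :=
  ModelsZFCminus S ∧ ∀ x ∈ S, ∃ p ∈ S, ∀ y, y ∈ p ↔ (y ∈ S ∧ y ⊆ x)

/-- `f` is (the graph of) a surjection of `a` onto `b`. -/
def SurjFun (f a b : ZFSet) : Prop :=
  ZFSet.IsFunc a b f ∧ ∀ y ∈ b, ∃ x ∈ a, ZFSet.pair x y ∈ f

/-- `f` is (the graph of) an injection of `a` into `b`. -/
def InjFun (f a b : ZFSet) : Prop :=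
  ZFSet.IsFunc a b f ∧ ∀ x ∈ a, ∀ x' ∈ a, ∀ y, ZFSet.pair x y ∈ f → ZFSet.pair x' y ∈ f → x = x'

/-- `f` is (the graph of) a cofinal function from `β` into the ordinal `α`. -/
def CofinalFun (f β α : ZFSet) : Prop :=
  ZFSet.IsFunc β α f ∧ ∀ ξ ∈ α, ∃ η ∈ β, ∃ ζ, ZFSet.pair η ζ ∈ f ∧ (ξ ∈ ζ ∨ ξ = ζ)

/-- `μ = cof(α)` as computed inside the class `S` (for `S = Set.univ`, the true cofinality). -/
def IsCofOf (S : Set ZFSet) (α μ : ZFSet) : Prop :=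
  μ ∈ S ∧ μ.IsOrdinal ∧ (∃ f ∈ S, CofinalFun f μ α) ∧
  ∀ ν ∈ S, ZFSet.IsOrdinal ν → (∃ f ∈ S, CofinalFun f ν α) → μ ⊆ ν

/-- `κ` is a cardinal from the point of view of the class `S`
(for `S = Set.univ`, a true cardinal). -/
def IsCardIn (S : Set ZFSet) (κ : ZFSet) : Prop :=
  κ.IsOrdinal ∧ ∀ α ∈ κ, ∀ f ∈ S, ¬ SurjFun f α κ

/-- `μ` is an (infinite) regular cardinal from the point of view of the class `S`. -/
def IsRegularIn (S : Set ZFSet) (μ : ZFSet) : Prop :=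
  ZFSet.omega ⊆ μ ∧ IsCardIn S μ ∧ IsCofOf S μ μ

/-- `ν = μ⁺`, the cardinal successor of `μ`, as computed in the class `S`. -/
def CardSuccIn (S : Set ZFSet) (μ ν : ZFSet) : Prop :=
  ν ∈ S ∧ IsCardIn S ν ∧ μ ∈ ν ∧ ∀ ξ ∈ S, IsCardIn S ξ → μ ∈ ξ → ν ⊆ ξ

/-- `μ` is the largest cardinal of the model `S`. -/
def IsLargestCardIn (S : Set ZFSet) (μ : ZFSet) : Prop :=
  μ ∈ S ∧ IsCardIn S μ ∧ ∀ x ∈ S, IsCardIn S x → x ⊆ μ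

/-- `α = sup A`, for `A` a collection of ordinals: `α` is the least ordinal above all of them. -/
def IsSupOf (α : ZFSet) (A : Set ZFSet) : Prop :=
  α.IsOrdinal ∧ (∀ a ∈ A, a ⊆ α) ∧ ∀ β : ZFSet, β.IsOrdinal → (∀ a ∈ A, a ⊆ β) → α ⊆ β

/-- `π` is an elementary embedding (for the language of set theory) from the class `S`
into the class `T`. -/
def IsElem (S T : Set ZFSet) (π : ZFSet → ZFSet) : Prop :=
  (∀ x ∈ S, π x ∈ T) ∧
  ∀ (n : ℕ) (φ : setL.BoundedFormula Empty n) (v : Fin n → ZFSet),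
    (∀ i, v i ∈ S) → (ZSat S φ v ↔ ZSat T φ (fun i => π (v i)))

/-- `C` is a `μ`-club in `ν = μ⁺`: a cofinal subset of `ν` closed under (suprema of)
increasing `μ`-sequences. -/
def MuClub (μ ν : ZFSet) (C : Set ZFSet) : Prop :=
  (∀ x ∈ C, x ∈ ν) ∧
  (∀ β ∈ ν, ∃ γ ∈ C, β ∈ γ ∨ β = γ) ∧
  (∀ s : ZFSet → ZFSet,
    (∀ ξ ∈ μ, s ξ ∈ C) →
    (∀ ξ η : ZFSet, ξ ∈ η → η ∈ μ → s ξ ∈ s η) →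
    ∀ γ ∈ ν, IsSupOf γ {y | ∃ ξ ∈ μ, y = s ξ} → γ ∈ C)

/-- The `μ`-club filter `C_{μ,μ⁺}` on `ν = μ⁺`: the filter generated by the cofinal subsets
of `ν` which are closed under increasing `μ`-sequences. -/
def muClubFilter (μ ν : ZFSet) : Filter ZFSet := Filter.generate {C | MuClub μ ν C}

/-!
Elementarity carries `Δ₀` facts across `π`, so `π` is increasing on the ordinals and `α ⊆ π α`;
hence `π μ` is a cardinal of `N` with `μ ⊆ π μ`, and `π μ = μ`. Every `γ < μ⁺` is, in `M`, the
image of a subset of `μ` under some `f`. If `γ` is the supremum of an increasing `μ`-sequence `s`,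
then regularity of `μ` puts `f[ξ]` below some `s ρ`, for each `ξ < μ`; applying `π` to this
statement and using `π μ = μ` shows that `π γ` is the supremum of `π ∘ s`. So `π` is continuous at
suprema of increasing `μ`-sequences, and its fixed points form a `μ`-club just as those of a normal
function form a club.
-/

/-! ### Absolute relations -/

attribute [local instance] Classical.allZFSetDefinable

universe u

theorem forall_snoc_mem {S : Set ZFSet.{u}} {n : ℕ} {v : Fin n → ZFSet} {x : ZFSet}
    (hv : ∀ i, v i ∈ S) (hx : x ∈ S) : ∀ i, (Fin.snoc v x : Fin (n + 1) → ZFSet) i ∈ S :=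
  Fin.lastCases (by simpa using hx) (by simpa using hv)

/-- `R` is absolute: some formula of set theory defines it, the same one in every transitive
class. Every `Δ₀` relation is absolute. -/
def IsAbsolute {n : ℕ} (R : (Fin n → ZFSet) → Prop) : Prop :=
  ∃ φ : setL.BoundedFormula Empty n, ∀ S : Set ZFSet, IsTransClass S →
    ∀ v : Fin n → ZFSet, (∀ i, v i ∈ S) → (ZSat S φ v ↔ R v)

namespace IsAbsolute

variable {n : ℕ} {Q R : (Fin n → ZFSet) → Prop} {i j k : Fin n}

theorem congr (hQ : IsAbsolute Q) (h : ∀ v, R v ↔ Q v) : IsAbsolute R := by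
  rwa [funext fun v => propext (h v)]

theorem mem : IsAbsolute fun v : Fin n → ZFSet => v i ∈ v j :=
  ⟨.rel SetLRel.mem ![&i, &j], fun _ _ _ _ => Iff.rfl⟩

theorem eq : IsAbsolute fun v : Fin n → ZFSet => v i = v j :=
  ⟨.equal (&i) (&j), fun _ _ _ _ => Iff.rfl⟩

theorem imp (hQ : IsAbsolute Q) (hR : IsAbsolute R) : IsAbsolute fun v => Q v → R v :=
  have ⟨φ, hφ⟩ := hQ
  have ⟨ψ, hψ⟩ := hR
  ⟨φ.imp ψ, fun S hS v hv => imp_congr (hφ S hS v hv) (hψ S hS v hv)⟩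

theorem not (hR : IsAbsolute R) : IsAbsolute fun v => ¬ R v :=
  have ⟨φ, hφ⟩ := hR
  ⟨φ.not, fun S hS v hv => not_congr (hφ S hS v hv)⟩

theorem and (hQ : IsAbsolute Q) (hR : IsAbsolute R) : IsAbsolute fun v => Q v ∧ R v :=
  (hQ.imp hR.not).not.congr fun _ => by tauto

theorem or (hQ : IsAbsolute Q) (hR : IsAbsolute R) : IsAbsolute fun v => Q v ∨ R v :=
  (hQ.not.imp hR).congr fun _ => by tauto

theorem ball {R : (Fin n → ZFSet) → ZFSet → Prop}
    (hR : IsAbsolute fun w : Fin (n + 1) → ZFSet => R (Fin.init w) (w (Fin.last n))) :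
    IsAbsolute fun v => ∀ x ∈ v i, R v x := by
  obtain ⟨φ, hφ⟩ := mem.imp hR (Q := fun w => w (Fin.last n) ∈ w i.castSucc)
  refine ⟨φ.all, fun S hS v hv => ?_⟩
  have hsnoc : ∀ x ∈ S, (ZSat S φ (Fin.snoc v x) ↔ (x ∈ v i → R v x)) := fun x hx => by
    simpa using hφ S hS (Fin.snoc v x) (forall_snoc_mem hv hx)
  exact ⟨fun h x hxv => (hsnoc x (hS _ (hv i) x hxv)).1 (h x (hS _ (hv i) x hxv)) hxv,
    fun h x hx => (hsnoc x hx).2 (h x)⟩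

theorem bex {R : (Fin n → ZFSet) → ZFSet → Prop}
    (hR : IsAbsolute fun w : Fin (n + 1) → ZFSet => R (Fin.init w) (w (Fin.last n))) :
    IsAbsolute fun v => ∃ x ∈ v i, R v x :=
  (ball (R := fun v x => ¬ R v x) hR.not).not.congr fun _ => by push Not; rfl

theorem subset : IsAbsolute fun v : Fin n → ZFSet => v i ⊆ v j :=
  ball mem

theorem isOrdinal : IsAbsolute fun v : Fin n → ZFSet => (v i).IsOrdinal := by
  refine (IsAbsolute.and (ball (ball mem)) (ball (ball (ball mem)))).congr
    (Q := fun v => (∀ y ∈ v i, ∀ z ∈ y, z ∈ v i) ∧ ∀ w ∈ v i, ∀ z ∈ w, ∀ y ∈ z, y ∈ w) fun v => ?_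
  exact ⟨fun h => ⟨fun y hy z hz => h.mem_trans hz hy, fun w hw z hz y hy => h.mem_trans' hy hz hw⟩,
    fun h => ⟨fun y hy z hz => h.1 y hy z hz, fun hy hz hw => h.2 _ hw _ hz _ hy⟩⟩

theorem eq_unorderedPair : IsAbsolute fun v : Fin n → ZFSet => v i = {v j, v k} := by
  refine (mem.and (mem.and (ball (eq.or eq)))).congr
    (Q := fun v => v j ∈ v i ∧ v k ∈ v i ∧ ∀ z ∈ v i, z = v j ∨ z = v k) fun v => ?_
  constructor
  · rintro h
    simp [h]
  · rintro ⟨hj, hk, h⟩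
    ext z
    rw [ZFSet.mem_pair]
    exact ⟨h z, by rintro (rfl | rfl) <;> assumption⟩

theorem eq_pair : IsAbsolute fun v : Fin n → ZFSet => v i = ZFSet.pair (v j) (v k) := by
  refine (bex (bex (eq_unorderedPair.and (eq_unorderedPair.and eq_unorderedPair)))).congr
    (Q := fun v => ∃ a ∈ v i, ∃ b ∈ v i, a = {v j, v j} ∧ b = {v j, v k} ∧ v i = {a, b}) fun v => ?_
  constructor
  · intro h
    simp [h, ZFSet.pair]
  · rintro ⟨a, -, b, -, rfl, rfl, h⟩
    rw [h, ZFSet.pair_eq_singleton, ZFSet.pair]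

theorem pair_mem : IsAbsolute fun v : Fin n → ZFSet => ZFSet.pair (v i) (v j) ∈ v k :=
  (bex eq_pair).congr (Q := fun v => ∃ p ∈ v k, p = ZFSet.pair (v i) (v j)) (by simp)

theorem surjFun : IsAbsolute fun v : Fin n → ZFSet => SurjFun (v i) (v j) (v k) := by
  have hprod : IsAbsolute fun v : Fin n → ZFSet =>
      ∀ p ∈ v i, ∃ x ∈ v j, ∃ y ∈ v k, p = ZFSet.pair x y := ball (bex (bex eq_pair))
  have hfun : IsAbsolute fun v : Fin n → ZFSet => ∀ x ∈ v j, ∃ y ∈ v k,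
      ZFSet.pair x y ∈ v i ∧ ∀ z ∈ v k, ZFSet.pair x z ∈ v i → z = y :=
    ball (bex (pair_mem.and (ball (pair_mem.imp eq))))
  have hsurj : IsAbsolute fun v : Fin n → ZFSet => ∀ y ∈ v k, ∃ x ∈ v j, ZFSet.pair x y ∈ v i :=
    ball (bex pair_mem)
  refine (hprod.and (hfun.and hsurj)).congr fun v => ⟨?_, ?_⟩
  · rintro ⟨⟨hsub, hfun⟩, hsurj⟩
    refine ⟨fun p hp => ZFSet.mem_prod.1 (hsub hp), fun x hx => ?_, hsurj⟩
    obtain ⟨y, hxy, hy⟩ := hfun x hx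
    exact ⟨y, (ZFSet.pair_mem_prod.1 (hsub hxy)).2, hxy, fun z _ => hy z⟩
  · rintro ⟨hsub, hfun, hsurj⟩
    replace hsub : v i ⊆ ZFSet.prod (v j) (v k) := fun p hp => ZFSet.mem_prod.2 (hsub p hp)
    refine ⟨⟨hsub, fun x hx => ?_⟩, hsurj⟩
    obtain ⟨y, -, hxy, hy⟩ := hfun x hx
    exact ⟨y, hxy, fun z hz => hy z (ZFSet.pair_mem_prod.1 (hsub hz)).2 hz⟩

end IsAbsolute

/-! ### Elementary maps -/

theorem IsTransClass.subset_map {X : Set ZFSet.{u}} (hX : IsTransClass X)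
    {π : ZFSet.{u} → ZFSet.{u}}
    (hord : ∀ α ∈ X, α.IsOrdinal → (π α).IsOrdinal) (hmem : ∀ β ∈ X, ∀ α ∈ β, π α ∈ π β)
    {α : ZFSet} (hα : α ∈ X) (hαo : α.IsOrdinal) : α ⊆ π α := by
  induction α using ZFSet.inductionOn with
  | h α ih =>
    intro η hη
    have hηo := hαo.mem hη
    exact hηo.mem_of_subset_of_mem (hord α hα hαo) (ih η hη (hX α hα η hη) hηo) (hmem α hα η hη)

namespace IsElem

variable {S T : Set ZFSet.{u}} {π : ZFSet.{u} → ZFSet.{u}}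

theorem iff_map (hπ : IsElem S T π) (hS : IsTransClass S) (hT : IsTransClass T) {n : ℕ}
    {R : (Fin n → ZFSet) → Prop} (hR : IsAbsolute R) {v : Fin n → ZFSet} (hv : ∀ i, v i ∈ S) :
    R v ↔ R (fun i => π (v i)) := by
  obtain ⟨φ, hφ⟩ := hR
  rw [← hφ S hS v hv, hπ.2 n φ v hv, hφ T hT _ fun i => hπ.1 _ (hv i)]

theorem exists_iff_exists_map (hπ : IsElem S T π) (hS : IsTransClass S) (hT : IsTransClass T)
    {n : ℕ} {R : (Fin (n + 1) → ZFSet) → Prop} (hR : IsAbsolute R) {v : Fin n → ZFSet}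
    (hv : ∀ i, v i ∈ S) :
    (∃ x ∈ S, R (Fin.snoc v x)) ↔ ∃ y ∈ T, R (Fin.snoc (fun i => π (v i)) y) := by
  obtain ⟨φ, hφ⟩ := hR
  have sat_iff : ∀ {U}, IsTransClass U → ∀ w : Fin n → ZFSet, (∀ i, w i ∈ U) →
      (ZSat U φ.not.all.not w ↔ ∃ x ∈ U, R (Fin.snoc w x)) := fun {U} hU w hw => by
    have hsnoc : ∀ x ∈ U, (ZSat U φ (Fin.snoc w x) ↔ R (Fin.snoc w x)) := fun x hx =>
      hφ U hU _ (forall_snoc_mem hw hx)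
    change (¬ ∀ x ∈ U, ¬ ZSat U φ (Fin.snoc w x)) ↔ _
    push Not
    exact exists_congr fun x => and_congr_right (hsnoc x)
  rw [← sat_iff hS v hv, hπ.2 n _ v hv, sat_iff hT _ fun i => hπ.1 _ (hv i)]

theorem map_mem_map (hπ : IsElem S T π) (hS : IsTransClass S) (hT : IsTransClass T) {x y : ZFSet}
    (hy : y ∈ S) (hxy : x ∈ y) : π x ∈ π y :=
  (hπ.iff_map hS hT (.mem (i := 0) (j := 1)) (v := ![x, y])
    (Fin.forall_fin_two.2 ⟨hS y hy x hxy, hy⟩)).1 hxy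

theorem map_subset_map (hπ : IsElem S T π) (hS : IsTransClass S) (hT : IsTransClass T)
    {x y : ZFSet} (hx : x ∈ S) (hy : y ∈ S) (hxy : x ⊆ y) : π x ⊆ π y :=
  (hπ.iff_map hS hT (.subset (i := 0) (j := 1)) (v := ![x, y])
    (Fin.forall_fin_two.2 ⟨hx, hy⟩)).1 hxy

theorem isOrdinal_map_iff (hπ : IsElem S T π) (hS : IsTransClass S) (hT : IsTransClass T)
    {x : ZFSet} (hx : x ∈ S) : (π x).IsOrdinal ↔ x.IsOrdinal :=
  (hπ.iff_map hS hT (.isOrdinal (i := 0)) (v := ![x]) (Fin.forall_fin_one.2 hx)).symm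

theorem subset_map (hπ : IsElem S T π) (hS : IsTransClass S) (hT : IsTransClass T) {α : ZFSet}
    (hα : α ∈ S) (hαo : α.IsOrdinal) : α ⊆ π α :=
  hS.subset_map (fun _ hβ => (hπ.isOrdinal_map_iff hS hT hβ).2)
    (fun _ hβ _ => hπ.map_mem_map hS hT hβ) hα hαo

theorem isCardIn_map_iff (hπ : IsElem S T π) (hS : IsTransClass S) (hT : IsTransClass T)
    {κ : ZFSet} (hκ : κ ∈ S) : IsCardIn T (π κ) ↔ IsCardIn S κ := by
  have isCardIn_iff : ∀ U κ, IsCardIn U κ ↔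
      κ.IsOrdinal ∧ ¬ ∃ f ∈ U, ∃ α ∈ κ, SurjFun f α κ := fun U κ => by
    simp only [IsCardIn]; push Not; tauto
  have hR : IsAbsolute fun w : Fin 2 → ZFSet => ∃ α ∈ w 0, SurjFun (w 1) α (w 0) := .bex .surjFun
  rw [isCardIn_iff, isCardIn_iff, hπ.isOrdinal_map_iff hS hT hκ]
  exact and_congr_right' (not_congr
    (hπ.exists_iff_exists_map hS hT hR (v := ![κ]) (Fin.forall_fin_one.2 hκ)).symm)

theorem map_eq_self_of_isLargestCardIn (hπ : IsElem S T π) (hS : IsTransClass S)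
    (hT : IsTransClass T) {μ : ZFSet} (hμS : IsLargestCardIn S μ) (hμT : IsLargestCardIn T μ) :
    π μ = μ :=
  have ⟨hμ, hμc, _⟩ := hμS
  subset_antisymm (hμT.2.2 _ (hπ.1 μ hμ) ((hπ.isCardIn_map_iff hS hT hμ).2 hμc))
    (hπ.subset_map hS hT hμ hμc.1)

end IsElem

/-! ### Surjections in models of ZFC⁻ -/

theorem pair_mem_map {F : ZFSet → ZFSet} {a x y : ZFSet} :
    ZFSet.pair x y ∈ ZFSet.map F a ↔ x ∈ a ∧ F x = y := by
  simp [ZFSet.mem_map]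

theorem surjFun_map (F : ZFSet → ZFSet) (a : ZFSet) : SurjFun (ZFSet.map F a) a (ZFSet.image F a) :=
  ⟨ZFSet.map_isFunc.2 fun _ => ZFSet.image.mk F a, fun y hy => by
    obtain ⟨x, hx, rfl⟩ := ZFSet.mem_image.1 hy
    exact ⟨x, hx, ZFSet.mem_map.2 ⟨x, hx, rfl⟩⟩⟩

namespace SurjFun

variable {f a b : ZFSet}

theorem exists_eq_map (hf : SurjFun f a b) : ∃ F, f = ZFSet.map F a ∧ b = ZFSet.image F a := by
  obtain ⟨⟨hsub, hfun⟩, hsurj⟩ := hf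
  choose! F hF hFuniq using hfun
  have pair_mem_iff : ∀ x y, ZFSet.pair x y ∈ f ↔ x ∈ a ∧ F x = y := fun x y =>
    ⟨fun h => have hx := (ZFSet.pair_mem_prod.1 (hsub h)).1; ⟨hx, (hFuniq x hx y h).symm⟩,
      by rintro ⟨hx, rfl⟩; exact hF x hx⟩
  refine ⟨F, ?_, ?_⟩
  · ext p
    rw [ZFSet.mem_map]
    refine ⟨fun hp => ?_, by rintro ⟨x, hx, rfl⟩; exact hF x hx⟩
    obtain ⟨x, -, y, -, rfl⟩ := ZFSet.mem_prod.1 (hsub hp)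
    obtain ⟨hx, rfl⟩ := (pair_mem_iff x y).1 hp
    exact ⟨x, hx, rfl⟩
  · ext y
    rw [ZFSet.mem_image]
    constructor
    · intro hy
      obtain ⟨x, -, hxy⟩ := hsurj y hy
      exact ⟨x, (pair_mem_iff x y).1 hxy⟩
    · rintro ⟨x, hx, rfl⟩
      exact (ZFSet.pair_mem_prod.1 (hsub (hF x hx))).2

theorem card_le (hf : SurjFun f a b) : b.card ≤ a.card := by
  obtain ⟨F, -, rfl⟩ := hf.exists_eq_map
  exact ZFSet.card_image_le

end SurjFun

theorem exists_surjFun_of_card_le {a b : ZFSet} (hb : b.Nonempty) (h : b.card ≤ a.card) :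
    ∃ f, SurjFun f a b := by
  obtain ⟨y₀, hy₀⟩ := hb
  obtain ⟨i⟩ : Nonempty (b ↪ a) := by
    rwa [← Cardinal.le_def, ZFSet.cardinalMk_coe_sort, ZFSet.cardinalMk_coe_sort,
      Cardinal.lift_le]
  let F : ZFSet → ZFSet :=
    Function.extend (fun y => (i y : ZFSet)) (fun y => (y : ZFSet)) fun _ => y₀
  have hFi : ∀ y, F (i y) = y := (Subtype.val_injective.comp i.injective).extend_apply _ _
  have himage : ZFSet.image F a = b := by
    ext y
    rw [ZFSet.mem_image]
    refine ⟨?_, fun hy => ⟨i ⟨y, hy⟩, (i ⟨y, hy⟩).2, hFi ⟨y, hy⟩⟩⟩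
    rintro ⟨x, -, rfl⟩
    by_cases hx : ∃ z, (i z : ZFSet) = x
    · obtain ⟨z, rfl⟩ := hx
      rw [hFi]
      exact z.2
    · rwa [show F x = y₀ from Function.extend_apply' _ _ _ hx]
  exact ⟨_, himage ▸ surjFun_map F a⟩

namespace ModelsZFCminus

variable {S : Set ZFSet}

theorem pair_mem (hS : ModelsZFCminus S) {x y : ZFSet} (hx : x ∈ S) (hy : y ∈ S) :
    ZFSet.pair x y ∈ S := by
  have hpair : ∀ x ∈ S, ∀ y ∈ S, ({x, y} : ZFSet) ∈ S := hS.2.2.1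
  have hsingleton : ({x} : ZFSet) ∈ S := ZFSet.pair_eq_singleton x ▸ hpair x hx x hx
  exact hpair _ hsingleton _ (hpair x hx y hy)

theorem map_mem (hS : ModelsZFCminus S) {n : ℕ} {R : (Fin (n + 2) → ZFSet) → Prop}
    (hR : IsAbsolute R) {p : Fin n → ZFSet} (hp : ∀ i, p i ∈ S) {a : ZFSet} (ha : a ∈ S)
    {F : ZFSet → ZFSet} (hF : ∀ x ∈ a, F x ∈ S)
    (hRF : ∀ x ∈ a, ∀ q, R (Fin.snoc (Fin.snoc p x) q) ↔ ZFSet.pair x (F x) = q) :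
    ZFSet.map F a ∈ S := by
  obtain ⟨φ, hφ⟩ := hR
  have htrans : IsTransClass S := hS.1
  have hpair : ∀ x ∈ a, ZFSet.pair x (F x) ∈ S := fun x hx =>
    hS.pair_mem (htrans a ha x hx) (hF x hx)
  have sat_iff : ∀ x ∈ a, ∀ q, q ∈ S ∧ ZSat S φ (Fin.snoc (Fin.snoc p x) q) ↔
      ZFSet.pair x (F x) = q := fun x hx q => by
    have hsat : q ∈ S → (ZSat S φ (Fin.snoc (Fin.snoc p x) q) ↔ ZFSet.pair x (F x) = q) :=
      fun hq => by
        rw [hφ S htrans _ (forall_snoc_mem (forall_snoc_mem hp (htrans a ha x hx)) hq), hRF x hx q]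
    exact ⟨fun h => (hsat h.1).1 h.2,
      fun h => have hq : q ∈ S := h ▸ hpair x hx; ⟨hq, (hsat hq).2 h⟩⟩
  obtain ⟨-, -, -, -, -, -, hrepl, -⟩ := hS
  obtain ⟨b, hb, hmem⟩ := hrepl n φ p hp a ha fun x hx => by simp [sat_iff x hx]
  convert hb
  ext q
  rw [ZFSet.mem_map, hmem]
  exact exists_congr fun x => and_congr_right fun hx => (sat_iff x hx q).symm

theorem map_id_mem (hS : ModelsZFCminus S) {a : ZFSet} (ha : a ∈ S) : ZFSet.map id a ∈ S := by
  have hR : IsAbsolute fun w : Fin 2 → ZFSet => w 1 = ZFSet.pair (w 0) (w 0) := .eq_pair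
  exact hS.map_mem hR (p := ![]) (fun i => i.elim0) ha (hS.1 a ha) fun _ _ _ => eq_comm

theorem map_comp_mem (hS : ModelsZFCminus S) {F G : ZFSet → ZFSet} {a b c : ZFSet} (ha : a ∈ S)
    (hb : b ∈ S) (hc : c ∈ S) (hGab : ∀ x ∈ a, G x ∈ b) (hFbc : ∀ y ∈ b, F y ∈ c)
    (hG : ZFSet.map G a ∈ S) (hF : ZFSet.map F b ∈ S) : ZFSet.map (F ∘ G) a ∈ S := by
  have hR : IsAbsolute fun w : Fin 6 → ZFSet => ∃ y ∈ w 0, ∃ z ∈ w 1,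
      ZFSet.pair (w 4) y ∈ w 2 ∧ ZFSet.pair y z ∈ w 3 ∧ w 5 = ZFSet.pair (w 4) z :=
    .bex (.bex (.and .pair_mem (.and .pair_mem .eq_pair)))
  refine hS.map_mem hR (p := ![b, c, ZFSet.map G a, ZFSet.map F b])
    (by simp [Fin.forall_fin_succ, *]) ha (fun x hx => hS.1 c hc _ (hFbc _ (hGab x hx)))
    fun x hx q => ?_
  change (∃ y ∈ b, ∃ z ∈ c, ZFSet.pair x y ∈ ZFSet.map G a ∧ ZFSet.pair y z ∈ ZFSet.map F b ∧
    q = ZFSet.pair x z) ↔ ZFSet.pair x (F (G x)) = q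
  simp only [pair_mem_map]
  constructor
  · rintro ⟨_, -, _, -, ⟨-, rfl⟩, ⟨-, rfl⟩, rfl⟩
    rfl
  · rintro rfl
    have hGx := hGab x hx
    exact ⟨_, hGx, _, hFbc _ hGx, ⟨hx, rfl⟩, ⟨hGx, rfl⟩, rfl⟩

theorem exists_surjFun_trans (hS : ModelsZFCminus S) {f g a b c : ZFSet} (ha : a ∈ S) (hb : b ∈ S)
    (hc : c ∈ S) (hg : g ∈ S) (hf : f ∈ S) (hgab : SurjFun g a b) (hfbc : SurjFun f b c) :
    ∃ h ∈ S, SurjFun h a c := by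
  obtain ⟨G, rfl, rfl⟩ := hgab.exists_eq_map
  obtain ⟨F, rfl, rfl⟩ := hfbc.exists_eq_map
  refine ⟨ZFSet.map (F ∘ G) a, hS.map_comp_mem ha hb hc (fun _ => ZFSet.image.mk G a)
    (fun _ => ZFSet.image.mk F _) hg hf, ?_⟩
  have himage : ZFSet.image F (ZFSet.image G a) = ZFSet.image (F ∘ G) a := by ext; simp
  exact himage ▸ surjFun_map (F ∘ G) a

theorem exists_isCardIn_surjFun (hS : ModelsZFCminus S) {γ : ZFSet} (hγ : γ ∈ S)
    (hγo : γ.IsOrdinal) : ∃ κ ∈ S, IsCardIn S κ ∧ ∃ f ∈ S, SurjFun f κ γ := by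
  have hid : SurjFun (ZFSet.map id γ) γ γ := by
    have himage : ZFSet.image id γ = γ := by ext; simp
    simpa only [himage] using surjFun_map id γ
  obtain ⟨κ, ⟨hκ, hκo, f, hf, hfκ⟩, hmin⟩ := ZFSet.mem_wf.has_min
    {α | α ∈ S ∧ α.IsOrdinal ∧ ∃ f ∈ S, SurjFun f α γ} ⟨γ, hγ, hγo, _, hS.map_id_mem hγ, hid⟩
  refine ⟨κ, hκ, ⟨hκo, fun α hα g hg hgα => ?_⟩, f, hf, hfκ⟩
  have hαS := hS.1 κ hκ α hα
  exact hmin α ⟨hαS, hκo.mem hα, hS.exists_surjFun_trans hαS hκ hγ hg hf hgα hfκ⟩ hα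

theorem exists_surjFun_of_isLargestCardIn (hS : ModelsZFCminus S) {μ γ : ZFSet}
    (hμ : IsLargestCardIn S μ) (hγ : γ ∈ S) (hγo : γ.IsOrdinal) :
    ∃ α ∈ S, α ⊆ μ ∧ ∃ f ∈ S, SurjFun f α γ :=
  have ⟨κ, hκ, hκcard, hf⟩ := hS.exists_isCardIn_surjFun hγ hγo
  ⟨κ, hκ, hμ.2.2 κ hκ hκcard, hf⟩

end ModelsZFCminus

open scoped Cardinal

/-! ### Regular cardinals and cardinal successors -/

namespace IsRegularIn

variable {μ : ZFSet.{u}}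

theorem isOrdinal (hμ : IsRegularIn Set.univ μ) : μ.IsOrdinal :=
  hμ.2.1.1

theorem empty_mem (hμ : IsRegularIn Set.univ μ) : ∅ ∈ μ :=
  hμ.1 ZFSet.omega_zero

theorem exists_bound (hμ : IsRegularIn Set.univ μ) {ξ : ZFSet} (hξ : ξ ∈ μ) {F : ZFSet → ZFSet}
    (hF : ∀ x ∈ ξ, F x ∈ μ) : ∃ ρ ∈ μ, ∀ x ∈ ξ, F x ∈ ρ := by
  have hμo := hμ.isOrdinal
  obtain ⟨-, -, -, -, -, hcof⟩ := hμ
  by_contra! hunbdd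
  refine ZFSet.mem_irrefl ξ (hcof ξ trivial (hμo.mem hξ) ⟨ZFSet.map F ξ, trivial,
    ZFSet.map_isFunc.2 hF, fun ρ hρ => ?_⟩ hξ)
  obtain ⟨x, hx, hFx⟩ := hunbdd ρ hρ
  have hle : ρ ⊆ F x := ((hμo.mem (hF x hx)).notMem_iff_subset (hμo.mem hρ)).1 hFx
  exact ⟨x, hx, F x, pair_mem_map.2 ⟨hx, rfl⟩,
    (((hμo.mem hρ).subset_iff_eq_or_mem (hμo.mem (hF x hx))).1 hle).symm⟩

theorem exists_gt (hμ : IsRegularIn Set.univ μ) {ξ : ZFSet} (hξ : ξ ∈ μ) : ∃ ρ ∈ μ, ξ ∈ ρ := by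
  have one_mem : insert ∅ ∅ ∈ μ := hμ.1 (ZFSet.omega_succ ZFSet.omega_zero)
  obtain ⟨ρ, hρ, h⟩ := hμ.exists_bound one_mem fun _ _ => hξ
  exact ⟨ρ, hρ, h ∅ (by simp)⟩

theorem exists_forall_mem_of_monotone (hμ : IsRegularIn Set.univ μ) {s : ZFSet → ZFSet}
    (hs : ∀ ξ η, ξ ∈ η → η ∈ μ → s ξ ⊆ s η) {G : ZFSet → ZFSet} {a ξ : ZFSet} (hξ : ξ ∈ μ)
    (hG : ∀ x ∈ a, ∃ ρ ∈ μ, G x ∈ s ρ) : ∃ ρ ∈ μ, ∀ x ∈ ξ, x ∈ a → G x ∈ s ρ := by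
  have hidx : ∀ x, ∃ ρ ∈ μ, x ∈ a → G x ∈ s ρ := fun x => by
    by_cases hx : x ∈ a
    · simpa [hx] using hG x hx
    · exact ⟨∅, hμ.empty_mem, fun h => absurd h hx⟩
  choose F hF hGF using hidx
  obtain ⟨ρ, hρ, hbound⟩ := hμ.exists_bound hξ fun x _ => hF x
  exact ⟨ρ, hρ, fun x hx hxa => hs _ _ (hbound x hx) hρ (hGF x hxa)⟩

theorem aleph0_le_card (hμ : IsRegularIn Set.univ μ) : ℵ₀ ≤ μ.card := by
  have nat_mem : ∀ n : ℕ, (n : Ordinal).toZFSet ∈ ZFSet.omega := fun n => by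
    induction n with
    | zero => simp [ZFSet.omega_zero]
    | succ n ih => simpa [Ordinal.toZFSet_add_one] using ZFSet.omega_succ ih
  have hsub : Ordinal.omega0.toZFSet ⊆ μ := fun x hx => by
    obtain ⟨a, ha, rfl⟩ := Ordinal.mem_toZFSet_iff.1 hx
    obtain ⟨n, rfl⟩ := Ordinal.lt_omega0.1 ha
    exact hμ.1 (nat_mem n)
  simpa using ZFSet.card_mono hsub

end IsRegularIn

theorem IsCardIn.card_lt {κ α : ZFSet} (hκ : IsCardIn Set.univ κ) (hα : α ∈ κ) :
    α.card < κ.card := by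
  by_contra! h
  obtain ⟨f, hf⟩ := exists_surjFun_of_card_le ⟨α, hα⟩ h
  exact hκ.2 α hα f trivial hf

theorem isCardIn_toZFSet_ord (S : Set ZFSet.{u}) (c : Cardinal.{u}) :
    IsCardIn S c.ord.toZFSet := by
  refine ⟨ZFSet.isOrdinal_toZFSet _, fun α hα f _ hf => ?_⟩
  obtain ⟨a, ha, rfl⟩ := Ordinal.mem_toZFSet_iff.1 hα
  have hle : c ≤ a.card := by simpa using hf.card_le
  exact (Cardinal.lt_ord.1 ha).not_ge hle

theorem card_rank_of_isOrdinal {α : ZFSet} (hα : α.IsOrdinal) : α.rank.card = α.card := by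
  rw [← Ordinal.card_toZFSet, hα.toZFSet_rank_eq]

theorem card_iUnion_le_of_le {x : ZFSet.{u}} {F : x → ZFSet.{u}} {c : Cardinal.{u}} (hc : ℵ₀ ≤ c)
    (hx : x.card ≤ c) (hF : ∀ y, (F y).card ≤ c) : (ZFSet.iUnion F).card ≤ c := by
  rw [← Cardinal.lift_le.{u + 1}]
  calc Cardinal.lift.{u + 1} (ZFSet.iUnion F).card
      ≤ Cardinal.sum fun y => (F y).card := ZFSet.lift_card_iUnion_le_sum_card
    _ ≤ Cardinal.sum fun _ : x => c := Cardinal.sum_le_sum _ _ hF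
    _ = Cardinal.lift.{u + 1} (x.card * c) := by
      rw [Cardinal.sum_const, ZFSet.cardinalMk_coe_sort, Cardinal.lift_mul]; simp
    _ ≤ Cardinal.lift.{u + 1} c :=
      Cardinal.lift_le.2 (Cardinal.mul_le_of_le hc hx le_rfl)

theorem isOrdinal_sUnion {x : ZFSet} (hx : ∀ y ∈ x, y.IsOrdinal) :
    (ZFSet.sUnion x).IsOrdinal := by
  refine ZFSet.isOrdinal_iff_forall_mem_isOrdinal.2
    ⟨ZFSet.IsTransitive.sUnion' fun y hy => (hx y hy).isTransitive, fun z hz => ?_⟩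
  obtain ⟨y, hy, hzy⟩ := ZFSet.mem_sUnion.1 hz
  exact (hx y hy).mem hzy

namespace CardSuccIn

variable {μ ν : ZFSet.{u}}

theorem isOrdinal (hν : CardSuccIn Set.univ μ ν) : ν.IsOrdinal :=
  hν.2.1.1

theorem card_le (hν : CardSuccIn Set.univ μ ν) {γ : ZFSet} (hγ : γ ∈ ν) : γ.card ≤ μ.card := by
  have hγo := hν.isOrdinal.mem hγ
  obtain ⟨-, hcard, hμν, hmin⟩ := hν
  have hμo := hcard.1.mem hμν
  by_contra! hlt
  have hμκ : μ ∈ γ.card.ord.toZFSet := Ordinal.mem_toZFSet_iff.2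
    ⟨μ.rank, Cardinal.lt_ord.2 ((card_rank_of_isOrdinal hμo).trans_lt hlt), hμo.toZFSet_rank_eq⟩
  have hκγ : γ.card.ord.toZFSet ⊆ γ := by
    conv_rhs => rw [← hγo.toZFSet_rank_eq]
    exact Ordinal.toZFSet_subset_toZFSet_iff.2
      (Cardinal.ord_le.2 (card_rank_of_isOrdinal hγo).ge)
  exact ZFSet.mem_irrefl γ (hκγ (hmin _ trivial (isCardIn_toZFSet_ord _ _) hμκ hγ))

theorem exists_subset_of_card_le (hν : CardSuccIn Set.univ μ ν) (hμ : ℵ₀ ≤ μ.card) {x : ZFSet}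
    (hx : x ⊆ ν) (hxμ : x.card ≤ μ.card) : ∃ δ ∈ ν, x ⊆ δ := by
  have hνo := hν.isOrdinal
  by_contra! hunbdd
  have hcover : ν ⊆ ZFSet.iUnion fun y : x => insert (y : ZFSet) y := fun δ hδ => by
    obtain ⟨y, hyx, hyδ⟩ : ∃ y ∈ x, y ∉ δ := by
      simpa [ZFSet.subset_def] using hunbdd δ hδ
    have hy := hx hyx
    have hδy : δ ⊆ y := ((hνo.mem hy).notMem_iff_subset (hνo.mem hδ)).1 hyδ
    rw [ZFSet.mem_iUnion]
    exact ⟨⟨y, hyx⟩, ZFSet.mem_insert_iff.2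
      (((hνo.mem hδ).subset_iff_eq_or_mem (hνo.mem hy)).1 hδy)⟩
  have hcard : (ZFSet.iUnion fun y : x => insert (y : ZFSet) y).card ≤ μ.card :=
    card_iUnion_le_of_le hμ hxμ fun y => ZFSet.card_insert_le.trans <|
      Cardinal.add_le_of_le hμ (hν.card_le (hx y.2)) (Cardinal.one_le_aleph0.trans hμ)
  exact ((ZFSet.card_mono hcover).trans hcard).not_gt (hν.2.1.card_lt hν.2.2.1)

theorem sUnion_mem (hν : CardSuccIn Set.univ μ ν) (hμ : ℵ₀ ≤ μ.card) {x : ZFSet}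
    (hx : x ⊆ ν) (hxμ : x.card ≤ μ.card) : (ZFSet.sUnion x : ZFSet) ∈ ν := by
  have hνo := hν.isOrdinal
  obtain ⟨δ, hδ, hxδ⟩ := hν.exists_subset_of_card_le hμ hx hxμ
  refine (isOrdinal_sUnion fun y hy => hνo.mem (hx hy)).mem_of_subset_of_mem hνo (y := δ) ?_ hδ
  intro z hz
  obtain ⟨y, hy, hzy⟩ := ZFSet.mem_sUnion.1 hz
  exact (hνo.mem hδ).mem_trans hzy (hxδ hy)

end CardSuccIn

/-! ### Fixed points of `μ`-normal maps -/

namespace IsSupOf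

variable {γ δ : ZFSet.{u}} {A : Set ZFSet.{u}}

theorem unique (hγ : IsSupOf γ A) (hδ : IsSupOf δ A) : γ = δ :=
  subset_antisymm (hγ.2.2 δ hδ.1 hδ.2.1) (hδ.2.2 γ hγ.1 hγ.2.1)

theorem mem_iff (hγ : IsSupOf γ A) (hA : ∀ a ∈ A, a.IsOrdinal) {x : ZFSet} :
    x ∈ γ ↔ ∃ a ∈ A, x ∈ a := by
  refine ⟨fun hx => ?_, fun ⟨a, ha, hxa⟩ => hγ.2.1 a ha hxa⟩
  by_contra! hxA
  have hxo := hγ.1.mem hx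
  have hγx := hγ.2.2 x hxo fun a ha => (hxo.notMem_iff_subset (hA a ha)).1 (hxA a ha)
  exact ZFSet.mem_irrefl x (hγx hx)

end IsSupOf

theorem isSupOf_sUnion {x : ZFSet} (hx : ∀ y ∈ x, y.IsOrdinal) :
    IsSupOf (ZFSet.sUnion x) {y | y ∈ x} := by
  refine ⟨isOrdinal_sUnion hx, fun y hy z hz => ZFSet.mem_sUnion.2 ⟨y, hy, hz⟩,
    fun β _ hβ z hz => ?_⟩
  obtain ⟨y, hy, hzy⟩ := ZFSet.mem_sUnion.1 hz
  exact hβ y hy hzy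

/-- `π` is a normal function on the ordinal `ν`, with continuity required only at suprema of
increasing `μ`-sequences. -/
structure IsMuNormal (μ ν : ZFSet) (π : ZFSet → ZFSet) : Prop where
  map_mem : ∀ α ∈ ν, π α ∈ ν
  map_mem_map : ∀ β ∈ ν, ∀ α ∈ β, π α ∈ π β
  isSupOf_map : ∀ s : ZFSet → ZFSet, (∀ ξ ∈ μ, s ξ ∈ ν) →
    (∀ ξ η, ξ ∈ η → η ∈ μ → s ξ ∈ s η) → ∀ γ ∈ ν, IsSupOf γ {y | ∃ ξ ∈ μ, y = s ξ} →
      IsSupOf (π γ) {y | ∃ ξ ∈ μ, y = π (s ξ)}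

theorem CardSuccIn.exists_isSupOf {μ ν : ZFSet.{u}} (hν : CardSuccIn Set.univ μ ν)
    (hμ : ℵ₀ ≤ μ.card) {s : ZFSet → ZFSet} (hs : ∀ ξ ∈ μ, s ξ ∈ ν) :
    ∃ γ ∈ ν, IsSupOf γ {y | ∃ ξ ∈ μ, y = s ξ} := by
  have himage : ZFSet.image s μ ⊆ ν := fun y hy => by
    obtain ⟨ξ, hξ, rfl⟩ := ZFSet.mem_image.1 hy
    exact hs ξ hξ
  refine ⟨_, hν.sUnion_mem hμ himage ZFSet.card_image_le, ?_⟩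
  convert isSupOf_sUnion fun y hy => hν.isOrdinal.mem (himage hy) using 2
  simp [eq_comm]

theorem CardSuccIn.exists_seq_map_mem {μ ν : ZFSet.{u}} (hν : CardSuccIn Set.univ μ ν)
    (hμ : ℵ₀ ≤ μ.card) {π : ZFSet → ZFSet} (hπ : ∀ α ∈ ν, π α ∈ ν) {β : ZFSet} (hβ : β ∈ ν) :
    ∃ s : ZFSet → ZFSet, ∀ ξ ∈ μ, s ξ ∈ ν ∧ β ∈ s ξ ∧ ∀ η ∈ ξ, π (s η) ∈ s ξ := by
  have hμo := hν.isOrdinal.mem hν.2.2.1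
  let s : ZFSet → ZFSet := ZFSet.mem_wf.fix fun ξ s =>
    Classical.epsilon fun δ => δ ∈ ν ∧ β ∈ δ ∧ ∀ η (hη : η ∈ ξ), π (s η hη) ∈ δ
  refine ⟨s, fun ξ => ?_⟩
  induction ξ using ZFSet.inductionOn with
  | h ξ ih =>
    intro hξ
    have hsub : insert β (ZFSet.image (π ∘ s) ξ) ⊆ ν := fun y hy => by
      rcases ZFSet.mem_insert_iff.1 hy with rfl | hy
      · exact hβ
      · obtain ⟨η, hη, rfl⟩ := ZFSet.mem_image.1 hy
        exact hπ _ (ih η hη (hμo.mem_trans hη hξ)).1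
    have hcard : (insert β (ZFSet.image (π ∘ s) ξ)).card ≤ μ.card :=
      ZFSet.card_insert_le.trans <| Cardinal.add_le_of_le hμ
        (ZFSet.card_image_le.trans (ZFSet.card_mono (hμo.subset_of_mem hξ)))
        (Cardinal.one_le_aleph0.trans hμ)
    obtain ⟨δ, hδ, hbound⟩ := hν.exists_subset_of_card_le hμ hsub hcard
    rw [show s ξ = _ from ZFSet.mem_wf.fix_eq _ ξ]
    exact Classical.epsilon_spec (p := fun δ => δ ∈ ν ∧ β ∈ δ ∧ ∀ η ∈ ξ, π (s η) ∈ δ)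
      ⟨δ, hδ, hbound (by simp), fun η hη => hbound (by simpa using .inr ⟨η, hη, rfl⟩)⟩

namespace IsMuNormal

variable {μ ν : ZFSet.{u}} {π : ZFSet.{u} → ZFSet.{u}}

theorem subset_map (hπ : IsMuNormal μ ν π) (hν : ν.IsOrdinal) {α : ZFSet} (hα : α ∈ ν) :
    α ⊆ π α :=
  IsTransClass.subset_map (X := {x | x ∈ ν}) (fun _ hx _ hy => hν.mem_trans hy hx)
    (fun _ hx _ => hν.mem (hπ.map_mem _ hx)) hπ.map_mem_map hα (hν.mem hα)

/-- If `π (s η) ∈ s ξ` for all `η ∈ ξ`, then `s` and `π ∘ s` are interleaved and so have the same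
supremum. -/
theorem exists_fixedPoint_gt (hπ : IsMuNormal μ ν π) (hμ : IsRegularIn Set.univ μ)
    (hν : CardSuccIn Set.univ μ ν) {β : ZFSet} (hβ : β ∈ ν) : ∃ γ ∈ ν, π γ = γ ∧ β ∈ γ := by
  have hνo := hν.isOrdinal
  obtain ⟨s, hs⟩ := hν.exists_seq_map_mem hμ.aleph0_le_card hπ.map_mem hβ
  have hsν : ∀ ξ ∈ μ, s ξ ∈ ν := fun ξ hξ => (hs ξ hξ).1
  have hincr : ∀ ξ η, ξ ∈ η → η ∈ μ → s ξ ∈ s η := fun ξ η hξη hη => by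
    have hξ := hsν ξ (hμ.isOrdinal.mem_trans hξη hη)
    exact (hνo.mem hξ).mem_of_subset_of_mem (hνo.mem (hsν η hη)) (hπ.subset_map hνo hξ)
      ((hs η hη).2.2 ξ hξη)
  obtain ⟨γ, hγ, hsup⟩ := hν.exists_isSupOf hμ.aleph0_le_card hsν
  have hsub : ∀ ξ ∈ μ, s ξ ⊆ γ := fun ξ hξ => hsup.2.1 _ ⟨ξ, hξ, rfl⟩
  refine ⟨γ, hγ, subset_antisymm ?_ (hπ.subset_map hνo hγ),
    hsub ∅ hμ.empty_mem (hs ∅ hμ.empty_mem).2.1⟩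
  refine (hπ.isSupOf_map s hsν hincr γ hγ hsup).2.2 γ hsup.1 ?_
  rintro _ ⟨ξ, hξ, rfl⟩
  obtain ⟨ρ, hρ, hξρ⟩ := hμ.exists_gt hξ
  exact hsup.1.subset_of_mem (hsub ρ hρ ((hs ρ hρ).2.2 ξ hξρ))

theorem muClub_fixedPoints (hπ : IsMuNormal μ ν π) (hμ : IsRegularIn Set.univ μ)
    (hν : CardSuccIn Set.univ μ ν) : MuClub μ ν {α | α ∈ ν ∧ π α = α} := by
  refine ⟨fun α hα => hα.1, fun β hβ => ?_, fun s hs hincr γ hγ hsup => ⟨hγ, ?_⟩⟩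
  · obtain ⟨γ, hγ, hfix, hβγ⟩ := hπ.exists_fixedPoint_gt hμ hν hβ
    exact ⟨γ, ⟨hγ, hfix⟩, .inl hβγ⟩
  · have hrange : {y | ∃ ξ ∈ μ, y = π (s ξ)} = {y | ∃ ξ ∈ μ, y = s ξ} :=
      Set.ext fun y => exists_congr fun ξ => and_congr_right fun hξ => by rw [(hs ξ hξ).2]
    have hsup_map := hπ.isSupOf_map s (fun ξ hξ => (hs ξ hξ).1) hincr γ hγ hsup
    exact (hrange ▸ hsup_map).unique hsup

end IsMuNormal

/-! ### Elementary maps are `μ`-normal -/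

namespace IsElem

variable {S T : Set ZFSet.{u}} {π : ZFSet.{u} → ZFSet.{u}}

/-- An element of `π γ` is the value of `π f` at some `ζ < μ`. Below a bound `ξ ∈ μ` of `ζ`, the
values of `f` all lie in one `s ρ` by regularity of `μ`, and elementarity carries this over
to `π f`. -/
theorem exists_mem_map_of_surjFun (hπ : IsElem S T π) (hS : IsTransClass S) (hT : IsTransClass T)
    {μ : ZFSet} (hμ : IsRegularIn Set.univ μ) (hμS : μ ∈ S) (hπμ : π μ = μ) {f α γ : ZFSet}
    (hf : f ∈ S) (hα : α ∈ S) (hγ : γ ∈ S) (hαμ : α ⊆ μ) (hfαγ : SurjFun f α γ)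
    {s : ZFSet → ZFSet} (hs : ∀ ξ ∈ μ, s ξ ∈ S) (hmono : ∀ ξ η, ξ ∈ η → η ∈ μ → s ξ ⊆ s η)
    (hγs : ∀ y ∈ γ, ∃ ξ ∈ μ, y ∈ s ξ) {η : ZFSet} (hη : η ∈ π γ) : ∃ ξ ∈ μ, η ∈ π (s ξ) := by
  have hπf : SurjFun (π f) (π α) (π γ) :=
    (hπ.iff_map hS hT (.surjFun (i := 0) (j := 1) (k := 2)) (v := ![f, α, γ])
      (by simp [Fin.forall_fin_succ, *])).1 hfαγ
  obtain ⟨ζ, hζα, hζη⟩ := hπf.2 η hη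
  have hζμ : ζ ∈ μ := hπμ ▸ hπ.map_subset_map hS hT hα hμS hαμ hζα
  obtain ⟨ξ, hξ, hζξ⟩ := hμ.exists_gt hζμ
  obtain ⟨ρ, hρ, hbound⟩ : ∃ ρ ∈ μ, ∀ x ∈ ξ, ∀ y ∈ γ, ZFSet.pair x y ∈ f → y ∈ s ρ := by
    obtain ⟨G, rfl, rfl⟩ := hfαγ.exists_eq_map
    obtain ⟨ρ, hρ, h⟩ := hμ.exists_forall_mem_of_monotone hmono hξ fun x hx =>
      hγs (G x) (ZFSet.image.mk G α hx)
    refine ⟨ρ, hρ, fun x hx y _ hxy => ?_⟩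
    obtain ⟨hxα, rfl⟩ := pair_mem_map.1 hxy
    exact h x hx hxα
  have hξS : ξ ∈ S := hS μ hμS ξ hξ
  have hR : IsAbsolute fun v : Fin 4 → ZFSet =>
      ∀ x ∈ v 0, ∀ y ∈ v 1, ZFSet.pair x y ∈ v 2 → y ∈ v 3 := .ball (.ball (.imp .pair_mem .mem))
  have hbound_map : ∀ x ∈ π ξ, ∀ y ∈ π γ, ZFSet.pair x y ∈ π f → y ∈ π (s ρ) :=
    (hπ.iff_map hS hT hR (v := ![ξ, γ, f, s ρ]) (by simp [Fin.forall_fin_succ, *])).1 hbound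
  have hξπ : ξ ⊆ π ξ := hπ.subset_map hS hT hξS (hμ.isOrdinal.mem hξ)
  exact ⟨ρ, hρ, hbound_map ζ (hξπ hζξ) η hη hζη⟩

theorem isMuNormal (hπ : IsElem S T π) (hS : IsTransClass S) (hT : IsTransClass T) {μ ν : ZFSet}
    (hμ : IsRegularIn Set.univ μ) (hν : ν.IsOrdinal) (hμν : μ ∈ ν) (hνS : ∀ x ∈ ν, x ∈ S)
    (hTν : ∀ x ∈ T, x.IsOrdinal → x ∈ ν)
    (hsurj : ∀ γ ∈ ν, ∃ α ∈ S, α ⊆ μ ∧ ∃ f ∈ S, SurjFun f α γ) (hπμ : π μ = μ) :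
    IsMuNormal μ ν π where
  map_mem α hα := hTν _ (hπ.1 α (hνS α hα))
    ((hπ.isOrdinal_map_iff hS hT (hνS α hα)).2 (hν.mem hα))
  map_mem_map β hβ _ := hπ.map_mem_map hS hT (hνS β hβ)
  isSupOf_map s hs hincr γ hγ hsup := by
    have hγS := hνS γ hγ
    have hsS : ∀ ξ ∈ μ, s ξ ∈ S := fun ξ hξ => hνS _ (hs ξ hξ)
    have hso : ∀ ξ ∈ μ, (s ξ).IsOrdinal := fun ξ hξ => hν.mem (hs ξ hξ)
    have hγs : ∀ y ∈ γ, ∃ ξ ∈ μ, y ∈ s ξ := fun y hy => by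
      obtain ⟨_, ⟨ξ, hξ, rfl⟩, hyξ⟩ :=
        (hsup.mem_iff (by rintro _ ⟨ξ, hξ, rfl⟩; exact hso ξ hξ)).1 hy
      exact ⟨ξ, hξ, hyξ⟩
    obtain ⟨α, hα, hαμ, f, hf, hfαγ⟩ := hsurj γ hγ
    refine ⟨(hπ.isOrdinal_map_iff hS hT hγS).2 hsup.1, ?_, fun β _ hβ η hη => ?_⟩
    · rintro _ ⟨ξ, hξ, rfl⟩
      exact hπ.map_subset_map hS hT (hsS ξ hξ) hγS (hsup.2.1 _ ⟨ξ, hξ, rfl⟩)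
    · have hmono : ∀ ξ η, ξ ∈ η → η ∈ μ → s ξ ⊆ s η := fun ξ η hξη hη =>
        (hso η hη).subset_of_mem (hincr ξ η hξη hη)
      obtain ⟨ξ, hξ, hηξ⟩ := hπ.exists_mem_map_of_surjFun hS hT hμ (hνS μ hμν) hπμ hf hα hγS hαμ
        hfαγ hsS hmono hγs hη
      exact hβ _ ⟨ξ, hξ, rfl⟩ hηξ

end IsElem

theorem fixed_points_mu_club'_general {μ ν : ZFSet.{u}} {M N : Set ZFSet.{u}}
    {π : ZFSet.{u} → ZFSet.{u}} (hμ : IsRegularIn Set.univ μ) (hν : CardSuccIn Set.univ μ ν)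
    (hM : IsTransClass M) (hN : IsTransClass N) (hνM : ∀ x ∈ ν, x ∈ M)
    (hNν : ∀ x ∈ N, x.IsOrdinal → x ∈ ν)
    (hsurj : ∀ γ ∈ ν, ∃ α ∈ M, α ⊆ μ ∧ ∃ f ∈ M, SurjFun f α γ) (hπ : IsElem M N π)
    (hπμ : π μ = μ) : {α | α ∈ ν ∧ π α = α} ∈ muClubFilter μ ν :=
  Filter.mem_generate_of_mem <|
    (hπ.isMuNormal hM hN hμ hν.isOrdinal hν.2.2.1 hνM hNν hsurj hπμ).muClub_fixedPoints hμ hν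

/-- Let `μ` be a regular cardinal and `M, N` transitive models of ZFC⁻ with
`o(M) = o(N) = μ⁺` and `μ` the largest cardinal of both `M` and `N`.  If `π : M → N` is
elementary, then the set of fixed points of `π` belongs to the `μ`-club filter on `μ⁺`. -/
theorem fixed_points_mu_club' (μ ν M N : ZFSet)
    (hμ : IsRegularIn Set.univ μ)
    (hν : CardSuccIn Set.univ μ ν)
    (hM : ModelsZFCminus M.toSet) (hN : ModelsZFCminus N.toSet)
    (hoM : ∀ x : ZFSet, (x ∈ M ∧ x.IsOrdinal) ↔ x ∈ ν)
    (hoN : ∀ x : ZFSet, (x ∈ N ∧ x.IsOrdinal) ↔ x ∈ ν)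
    (hlcM : IsLargestCardIn M.toSet μ)
    (hlcN : IsLargestCardIn N.toSet μ)
    (π : ZFSet → ZFSet) (hπ : IsElem M.toSet N.toSet π) :
    {α : ZFSet | α ∈ ν ∧ π α = α} ∈ muClubFilter μ ν :=
  fixed_points_mu_club'_general hμ hν hM.1 hN.1 (fun x hx => ((hoM x).2 hx).1)
    (fun x hx hxo => (hoN x).1 ⟨hx, hxo⟩)
    (fun γ hγ => have ⟨hγM, hγo⟩ := (hoM γ).2 hγ
      hM.exists_surjFun_of_isLargestCardIn hlcM hγM hγo)
    hπ (hπ.map_eq_self_of_isLargestCardIn hM.1 hN.1 hlcM hlcN)
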